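/- Let V be a nonempty finite type, ω : V → V → ℝ symmetric with ω x y ≥ 0 and ω x x = 0, and μ(x) = ∑_y ω x y with μ(x) > 0 for all x. Let φ : V → ℝ be strictly positive, and suppose v : ℝ → V → ℝ satisfies v t x ≥ 0 for all t ≥ 0 and x, and for every x and t ≥ 0 the map t ↦ v t x has derivative (𝓛_φ (v t))(x) at t, where (𝓛_φ g)(x) = φ(x) · μ(x)⁻¹ · ∑_y ω x y · (g(y)/φ(y) − g(x)/φ(x)). Then for all 0 ≤ s ≤ t and all x, v t x ≥ exp(−(t − s)) · v s x. -/

import Mathlib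

/-!
Since `∑ y, ω x y = μ x`, the tilted generator is a jump operator minus the identity. The jump
operator preserves nonnegativity, so a nonnegative solution satisfies `∂ₜ v ≥ -v` at each vertex
separately, and Grönwall's inequality for `-v` gives the exponential lower bound.
-/

open Set

theorem exp_mul_le_of_mul_le_deriv_right {f f' : ℝ → ℝ} {K a b : ℝ}
    (hf : ContinuousOn f (Icc a b)) (hf' : ∀ t ∈ Ico a b, HasDerivWithinAt f (f' t) (Ici t) t)
    (bound : ∀ t ∈ Ico a b, K * f t ≤ f' t) {t : ℝ} (ht : t ∈ Icc a b) :
    Real.exp (K * (t - a)) * f a ≤ f t := by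
  have neg_le_gronwall : -f t ≤ gronwallBound (-f a) K 0 (t - a) :=
    le_gronwallBound_of_liminf_deriv_right_le hf.neg
      (fun r hr _ ↦ (hf' r hr).neg.liminf_right_slope_le) le_rfl
      (fun r hr ↦ by simpa using bound r hr) t ht
  rw [gronwallBound_ε0] at neg_le_gronwall
  linarith

section TiltedGenerator

variable {V : Type*} {ω : V → V → ℝ} {μ φ g : V → ℝ} {x : V}

/-- The generator `𝓛_φ g = φ 𝓛 (g / φ)` of the random walk with conductances `ω` and speed
measure `μ`, tilted by `φ`. The constant-speed walk is the case where `ω x` sums to `μ x` for every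
`x`. On an infinite vertex set the value is meaningful only where the series is summable. -/
noncomputable def tiltedGenerator (ω : V → V → ℝ) (μ φ g : V → ℝ) (x : V) : ℝ :=
  φ x * (μ x)⁻¹ * ∑' y, ω x y * (g y / φ y - g x / φ x)

theorem tiltedGenerator_eq_tsum_sub_self (hμ : HasSum (ω x) (μ x)) (hμx : μ x ≠ 0)
    (hφx : φ x ≠ 0) (hg : Summable fun y ↦ ω x y * (g y / φ y)) :
    tiltedGenerator ω μ φ g x = φ x * (μ x)⁻¹ * ∑' y, ω x y * (g y / φ y) - g x := by
  have tsum_eq : ∑' y, ω x y * (g y / φ y - g x / φ x) =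
      ∑' y, ω x y * (g y / φ y) - μ x * (g x / φ x) := by
    simp only [mul_sub]
    exact (hg.hasSum.sub (hμ.mul_right _)).tsum_eq
  rw [tiltedGenerator, tsum_eq]
  field_simp

theorem neg_le_tiltedGenerator (hω : ∀ y, 0 ≤ ω x y) (hμ : HasSum (ω x) (μ x))
    (hμx : 0 < μ x) (hφ : ∀ y, 0 < φ y) (hg : Summable fun y ↦ ω x y * (g y / φ y))
    (hg_nonneg : ∀ y, 0 ≤ g y) : -g x ≤ tiltedGenerator ω μ φ g x := by
  have jump_nonneg : 0 ≤ φ x * (μ x)⁻¹ * ∑' y, ω x y * (g y / φ y) :=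
    mul_nonneg (mul_nonneg (hφ x).le (inv_nonneg.2 hμx.le))
      (tsum_nonneg fun y ↦ mul_nonneg (hω y) (div_nonneg (hg_nonneg y) (hφ y).le))
  rw [tiltedGenerator_eq_tsum_sub_self hμ hμx.ne' (hφ x).ne' hg]
  linarith

end TiltedGenerator

theorem tilted_csrw_exp_lower_bound_general {V : Type*} {ω : V → V → ℝ} {μ φ : V → ℝ} {x : V}
    (hω : ∀ y, 0 ≤ ω x y) (hμ : HasSum (ω x) (μ x)) (hμx : 0 < μ x) (hφ : ∀ y, 0 < φ y)
    {v : ℝ → V → ℝ} {s t : ℝ} (hst : s ≤ t) (hv_nonneg : ∀ r ∈ Icc s t, ∀ y, 0 ≤ v r y)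
    (hv_summable : ∀ r ∈ Icc s t, Summable fun y ↦ ω x y * (v r y / φ y))
    (hv : ∀ r ∈ Icc s t,
      HasDerivWithinAt (fun r ↦ v r x) (tiltedGenerator ω μ φ (v r) x) (Icc s t) r) :
    Real.exp (-(t - s)) * v s x ≤ v t x := by
  have hv_right : ∀ r ∈ Ico s t,
      HasDerivWithinAt (fun r ↦ v r x) (tiltedGenerator ω μ φ (v r) x) (Ici r) r := fun r hr ↦
    (hv r (Ico_subset_Icc_self hr)).mono_of_mem_nhdsWithin (Icc_mem_nhdsGE_of_mem hr)
  have neg_le_deriv : ∀ r ∈ Ico s t, -1 * v r x ≤ tiltedGenerator ω μ φ (v r) x := by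
    intro r hr
    have hr' := Ico_subset_Icc_self hr
    rw [neg_one_mul]
    exact neg_le_tiltedGenerator hω hμ hμx hφ (hv_summable r hr') (hv_nonneg r hr')
  rw [← neg_one_mul (t - s)]
  exact exp_mul_le_of_mul_le_deriv_right (fun r hr ↦ (hv r hr).continuousWithinAt) hv_right
    neg_le_deriv (right_mem_Icc.2 hst)

open Finset in
/-- Exponential lower bound `v(t,x) ≥ e^{-(t-s)} v(s,x)` for nonnegative solutions
of the tilted CSRW heat equation on a finite weighted graph. -/
theorem tilted_csrw_exp_lower_bound {V : Type*} [Fintype V] [Nonempty V]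
    (ω : V → V → ℝ) (hsym : ∀ x y, ω x y = ω y x) (hnn : ∀ x y, 0 ≤ ω x y)
    (hdiag : ∀ x, ω x x = 0)
    (μ : V → ℝ) (hμ : ∀ x, μ x = ∑ y, ω x y) (hμpos : ∀ x, 0 < μ x)
    (φ : V → ℝ) (hφ : ∀ x, 0 < φ x)
    (v : ℝ → V → ℝ)
    (hvnn : ∀ t : ℝ, 0 ≤ t → ∀ x, 0 ≤ v t x)
    (hv : ∀ x, ∀ t : ℝ, 0 ≤ t →
      HasDerivAt (fun s => v s x)
        (φ x * (μ x)⁻¹ * ∑ y, ω x y * (v t y / φ y - v t x / φ x)) t)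
    (s t : ℝ) (hs : 0 ≤ s) (hst : s ≤ t) (x : V) :
    Real.exp (-(t - s)) * v s x ≤ v t x := by
  refine tilted_csrw_exp_lower_bound_general (hnn x) (hμ x ▸ hasSum_fintype (ω x)) (hμpos x) hφ hst
    (fun r hr ↦ hvnn r (hs.trans hr.1)) (fun _ _ ↦ .of_finite) fun r hr ↦ ?_
  simpa only [tiltedGenerator, tsum_fintype] using (hv x r (hs.trans hr.1)).hasDerivWithinAt
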